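/- Let T_m be a tree with m edges. Then the normalized volume of its cosmological polytope is Vol(C_{T_m}) = 4^m. -/

import Mathlib

open Polynomial Pointwise

/-- The set of vertices (generating points) of the cosmological polytope of the
multigraph with edge-endpoint map `ends : E → Sym2 V`. -/
def cosmoVertices {V E : Type*} [DecidableEq V] [DecidableEq E] (ends : E → Sym2 V) :
    Set ((V ⊕ E) → ℝ) :=
  { x | ∃ (f : E) (i j : V), ends f = s(i, j) ∧
      (x = Pi.single (Sum.inl i) 1 + Pi.single (Sum.inl j) 1 - Pi.single (Sum.inr f) 1 ∨
       x = Pi.single (Sum.inl i) 1 - Pi.single (Sum.inl j) 1 + Pi.single (Sum.inr f) 1 ∨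
       x = -Pi.single (Sum.inl i) 1 + Pi.single (Sum.inl j) 1 + Pi.single (Sum.inr f) 1) }

/-- The cosmological polytope of a multigraph. -/
def cosmoPolytope {V E : Type*} [DecidableEq V] [DecidableEq E] (ends : E → Sym2 V) :
    Set ((V ⊕ E) → ℝ) :=
  convexHull ℝ (cosmoVertices ends)

/-- Number of lattice points of the `t`-th dilate of `P`. -/
noncomputable def latticePointCount {ι : Type*} (P : Set (ι → ℝ)) (t : ℕ) : ℕ :=
  Set.ncard { x : ι → ℤ | (fun k => (x k : ℝ)) ∈ (t : ℝ) • P }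

/-- The Ehrhart series of `P` as a formal power series. -/
noncomputable def ehrhartSeries {ι : Type*} (P : Set (ι → ℝ)) : PowerSeries ℚ :=
  PowerSeries.mk fun t => if t = 0 then 1 else (latticePointCount P t : ℚ)

/-- `h` is the `h^*`-polynomial of the `d`-dimensional lattice polytope `P`:
`Ehr(P; z) = h(z) / (1-z)^(d+1)` as formal power series. -/
def IsHStarPoly {ι : Type*} (P : Set (ι → ℝ)) (d : ℕ) (h : Polynomial ℚ) : Prop :=
  ehrhartSeries P * (1 - PowerSeries.X) ^ (d + 1) = (h : PowerSeries ℚ)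

/-- Adjacency relation of the multigraph given by `ends`. -/
def multigraphAdj {V E : Type*} (ends : E → Sym2 V) (i j : V) : Prop :=
  ∃ f, ends f = s(i, j)

/-- Reachability in the multigraph given by `ends`. -/
def multigraphReach {V E : Type*} (ends : E → Sym2 V) : V → V → Prop :=
  Relation.ReflTransGen (multigraphAdj ends)

/-- The number of connected components of the multigraph given by `ends`. -/
noncomputable def numComponents {V E : Type*} (ends : E → Sym2 V) : ℕ :=
  Nat.card (Quot (multigraphReach ends))

/-!
The lattice points of the dilates `t • C_G` are the lattice points, sorted by coordinate sum, of the
cone spanned by the vertices of `C_G`. Build a forest by adding one vertex `l` at a time, and let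
`p` and `q` be the coordinates of a point at `l` and at the edge which joins `l` to the rest.

* If `l` is attached to `v` by an edge `f`, a point of the new cone is uniquely the sum of a point
  of the old cone and of `p e_l + q e_f - min(p, q) e_v` with `0 ≤ p + q`: two of the vertices
  contributed by `f` add up to `2 e_v`, which is already in the old cone. The second summand has
  coordinate sum `max(p, q)`, so the generating function is multiplied by
  `∑_{p + q ≥ 0} z ^ max(p, q) = ∑ₜ (4t + 1) z ^ t = (1 + 3z) / (1 - z)²`.
* If `l` is isolated, the generating function is multiplied by `1 / (1 - z)`.

Hence a forest with `n` vertices and `m` edges has series `(1 + 3z) ^ m / (1 - z) ^ (n + m)`, so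
that `h* = (1 + 3z) ^ m`, with value `4 ^ m` at `z = 1`.
-/

section GeneratingFunctions

variable {α β M : Type*}

/-- `d` is a grading of the set `A` by natural numbers with finitely many elements in each degree.
The degree is integer-valued so that it can be a linear form on a lattice. -/
structure IsFinitelyGraded (A : Set α) (d : α → ℤ) : Prop where
  nonneg : ∀ a ∈ A, 0 ≤ d a
  finite : ∀ t : ℕ, {a ∈ A | d a = t}.Finite

/-- The generating function `∑ₐ z ^ d(a)` of a set `A` with degree function `d`, for finitely graded
`A` (an infinite degree part would contribute `0`). -/
noncomputable def countingSeries (A : Set α) (d : α → ℤ) : PowerSeries ℚ :=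
  PowerSeries.mk fun t => ({a ∈ A | d a = t}.ncard : ℚ)

lemma countingSeries_eq_of_bijOn {A : Set α} {B : Set β} {d : α → ℤ} {e : β → ℤ} {φ : α → β}
    (hφ : Set.BijOn φ A B) (hd : ∀ a ∈ A, e (φ a) = d a) :
    countingSeries A d = countingSeries B e := by
  ext t
  simp only [countingSeries, PowerSeries.coeff_mk, Nat.cast_inj]
  refine Set.BijOn.ncard_eq (f := φ) ⟨fun a ha => ⟨hφ.mapsTo ha.1, (hd a ha.1).trans ha.2⟩,
    hφ.injOn.mono fun a ha => ha.1, ?_⟩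
  rintro b ⟨hb, hbt⟩
  obtain ⟨a, ha, rfl⟩ := hφ.surjOn hb
  exact ⟨a, ⟨ha, (hd a ha).symm.trans hbt⟩, rfl⟩

lemma countingSeries_singleton {a : α} {d : α → ℤ} (ha : d a = 0) : countingSeries {a} d = 1 := by
  ext t
  rw [countingSeries, PowerSeries.coeff_mk, PowerSeries.coeff_one]
  split_ifs with ht
  · have : {x ∈ ({a} : Set α) | d x = t} = {a} := by grind
    rw [this, Set.ncard_singleton, Nat.cast_one]
  · have : {x ∈ ({a} : Set α) | d x = t} = ∅ := by grind
    rw [this, Set.ncard_empty, Nat.cast_zero]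

lemma countingSeries_prod {A : Set α} {B : Set β} {d : α → ℤ} {e : β → ℤ}
    (hA : IsFinitelyGraded A d) (hB : IsFinitelyGraded B e) :
    countingSeries (A ×ˢ B) (fun x => d x.1 + e x.2) = countingSeries A d * countingSeries B e := by
  ext t
  let part (k : ℕ × ℕ) : Set (α × β) := {a ∈ A | d a = k.1} ×ˢ {b ∈ B | e b = k.2}
  have hpart : {x ∈ A ×ˢ B | d x.1 + e x.2 = t} =
      ⋃ k ∈ (Finset.HasAntidiagonal.antidiagonal t : Set (ℕ × ℕ)), part k := by
    ext ⟨a, b⟩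
    simp only [part, Set.mem_ofPred_eq, Set.mem_prod, Set.mem_iUnion, exists_prop, Finset.mem_coe,
      Finset.HasAntidiagonal.mem_antidiagonal, Prod.exists]
    constructor
    · rintro ⟨⟨ha, hb⟩, hab⟩
      have := hA.nonneg a ha
      have := hB.nonneg b hb
      exact ⟨(d a).toNat, (e b).toNat, by omega, ⟨ha, by omega⟩, hb, by omega⟩
    · rintro ⟨i, j, hij, ⟨ha, hi⟩, hb, hj⟩
      exact ⟨⟨ha, hb⟩, by omega⟩
  have hdisj : (Finset.HasAntidiagonal.antidiagonal t : Set (ℕ × ℕ)).PairwiseDisjoint part := by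
    refine fun k _ l _ hkl => Set.disjoint_left.2 fun x hk hl => hkl (Prod.ext ?_ ?_)
    · exact_mod_cast hk.1.2.symm.trans hl.1.2
    · exact_mod_cast hk.2.2.symm.trans hl.2.2
  simp only [countingSeries, PowerSeries.coeff_mul, PowerSeries.coeff_mk]
  rw [hpart, Set.Finite.ncard_biUnion (Finset.finite_toSet _)
    (fun k _ => (hA.finite k.1).prod (hB.finite k.2)) hdisj, finsum_mem_coe_finset]
  simp only [part, Set.ncard_prod, Nat.cast_sum, Nat.cast_mul]

lemma countingSeries_eq_mul [AddCommGroup M] {A C : Set M} {B : Set β} {d : M → ℤ} {e : β → ℤ}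
    {π : M → β} {σ : β → M} (hA : IsFinitelyGraded A d) (hB : IsFinitelyGraded B e)
    (hC : ∀ x, x ∈ C ↔ π x ∈ B ∧ x - σ (π x) ∈ A) (hπ : ∀ a ∈ A, ∀ b, π (a + σ b) = b)
    (hd : ∀ a b, d (a + σ b) = d a + e b) :
    countingSeries C d = countingSeries A d * countingSeries B e := by
  rw [← countingSeries_prod hA hB]
  refine (countingSeries_eq_of_bijOn (φ := fun x => x.1 + σ x.2) ⟨?_, ?_, ?_⟩
    fun x _ => hd x.1 x.2).symm
  · rintro ⟨a, b⟩ ⟨ha, hb⟩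
    exact (hC _).2 (by simpa [hπ a ha] using ⟨hb, ha⟩)
  · rintro ⟨a, b⟩ ⟨ha, -⟩ ⟨a', b'⟩ ⟨ha', -⟩ h
    obtain rfl : b = b' := by simpa [hπ a ha, hπ a' ha'] using congrArg π h
    simpa using h
  · intro x hx
    exact ⟨(x - σ (π x), π x), ((hC x).1 hx).symm, sub_add_cancel _ _⟩

lemma isFinitelyGraded_nonneg : IsFinitelyGraded {p : ℤ | 0 ≤ p} id where
  nonneg _ hp := hp
  finite t := (Set.finite_singleton (t : ℤ)).subset fun _ hp => hp.2

lemma countingSeries_nonneg : countingSeries {p : ℤ | 0 ≤ p} id = PowerSeries.mk 1 := by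
  ext t
  have : {p ∈ {p : ℤ | 0 ≤ p} | id p = t} = {(t : ℤ)} := by
    ext p
    simp only [Set.mem_ofPred_eq, id_eq, Set.mem_singleton_iff]
    omega
  rw [countingSeries, PowerSeries.coeff_mk, this, Set.ncard_singleton, Nat.cast_one,
    PowerSeries.coeff_mk, Pi.one_apply]

/-- The integer points of the half-plane `0 ≤ p + q`. -/
def halfPlane : Set (ℤ × ℤ) := {x | 0 ≤ x.1 + x.2}

lemma halfPlane_degree_eq (k : ℕ) : {x ∈ halfPlane | max x.1 x.2 = k} =
    (({(k : ℤ)} ×ˢ Finset.Icc (-k : ℤ) k ∪ Finset.Ico (-k : ℤ) k ×ˢ {(k : ℤ)} :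
      Finset (ℤ × ℤ)) : Set (ℤ × ℤ)) := by
  ext ⟨p, q⟩
  simp only [halfPlane, Set.mem_ofPred_eq, Finset.mem_coe, Finset.mem_union, Finset.mem_product,
    Finset.mem_singleton, Finset.mem_Icc, Finset.mem_Ico]
  omega

lemma isFinitelyGraded_halfPlane : IsFinitelyGraded halfPlane fun x => max x.1 x.2 where
  nonneg x hx := by
    have : 0 ≤ x.1 + x.2 := hx
    omega
  finite k := halfPlane_degree_eq k ▸ Finset.finite_toSet _

lemma ncard_halfPlane_degree (k : ℕ) : {x ∈ halfPlane | max x.1 x.2 = k}.ncard = 4 * k + 1 := by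
  rw [halfPlane_degree_eq, Set.ncard_coe_finset, Finset.card_union_of_disjoint]
  · simp only [Finset.card_product, Finset.card_singleton, Int.card_Icc, Int.card_Ico]
    omega
  · refine Finset.disjoint_left.2 fun x hx hx' => ?_
    simp only [Finset.mem_product, Finset.mem_singleton, Finset.mem_Ico] at hx hx'
    omega

lemma countingSeries_halfPlane_mul :
    countingSeries halfPlane (fun x => max x.1 x.2) * (1 - PowerSeries.X) ^ 2 =
      1 + 3 * PowerSeries.X := by
  have hseries : countingSeries halfPlane (fun x => max x.1 x.2) =
      4 • PowerSeries.mk 1 ^ 2 - 3 • PowerSeries.mk 1 := by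
    ext k
    simp only [countingSeries, ncard_halfPlane_degree, PowerSeries.mk_one_pow_eq_mk_choose_add,
      PowerSeries.coeff_mk, map_sub, LinearMap.map_smul_of_tower, Nat.choose_one_right,
      Pi.one_apply, nsmul_one]
    push_cast
    ring
  have hgeom := PowerSeries.mk_one_mul_one_sub_eq_one ℚ
  simp only [hseries, nsmul_eq_mul, Nat.cast_ofNat]
  linear_combination
    (4 * (PowerSeries.mk 1 * (1 - PowerSeries.X) + 1) - 3 * (1 - PowerSeries.X)) * hgeom

end GeneratingFunctions

section ConvexGeometry

variable {𝕜 E : Type*} [Field 𝕜] [LinearOrder 𝕜] [IsStrictOrderedRing 𝕜] [AddCommGroup E]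
  [Module 𝕜 E] {φ : E →ₗ[𝕜] 𝕜} {s : Set E} {x : E}

lemma eq_zero_or_mem_smul_convexHull_of_mem_hull (hs : ∀ y ∈ s, φ y = 1)
    (hx : x ∈ PointedCone.hull 𝕜 s) : x = 0 ∨ 0 < φ x ∧ x ∈ φ x • convexHull 𝕜 s := by
  induction hx using Submodule.span_induction with
  | zero => exact .inl rfl
  | mem y hy => exact .inr (by simpa [hs y hy] using subset_convexHull 𝕜 s hy)
  | smul a y _ hy =>
    rcases eq_or_ne a 0 with rfl | ha
    · exact .inl (zero_smul _ y)
    rcases hy with rfl | ⟨hpos, hy⟩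
    · exact .inl (smul_zero a)
    · have hφ : φ (a • y) = a * φ y := φ.map_smul (a : 𝕜) y
      rw [hφ, mul_smul]
      exact .inr ⟨mul_pos (a.2.lt_of_ne' (Subtype.coe_injective.ne ha)) hpos,
        Set.smul_mem_smul_set hy⟩
  | add y z _ _ hy hz =>
    rcases hy with rfl | ⟨hy₀, hy⟩
    · rwa [zero_add]
    rcases hz with rfl | ⟨hz₀, hz⟩
    · rw [add_zero]
      exact .inr ⟨hy₀, hy⟩
    · rw [map_add, (convex_convexHull 𝕜 s).add_smul hy₀.le hz₀.le]
      exact .inr ⟨add_pos hy₀ hz₀, Set.add_mem_add hy hz⟩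

lemma mem_smul_convexHull_iff (hs : ∀ y ∈ s, φ y = 1) {r : 𝕜} (hr : 0 < r) :
    x ∈ r • convexHull 𝕜 s ↔ x ∈ PointedCone.hull 𝕜 s ∧ φ x = r := by
  constructor
  · rintro ⟨y, hy, rfl⟩
    have hcone : y ∈ PointedCone.hull 𝕜 s :=
      convexHull_min PointedCone.subset_hull (PointedCone.convex _) hy
    have hφ : φ y = 1 := convexHull_min hs (convex_hyperplane φ.isLinear 1) hy
    exact ⟨PointedCone.smul_mem _ hr.le hcone, by simp [hφ]⟩
  · rintro ⟨hx, rfl⟩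
    rcases eq_zero_or_mem_smul_convexHull_of_mem_hull hs hx with rfl | ⟨-, hx⟩
    · simp at hr
    · exact hx

end ConvexGeometry

section LatticePoints

variable {ι : Type*}

/-- The integer points of a subset of `ℝ^ι`. -/
def latticePoints (C : Set (ι → ℝ)) : Set (ι → ℤ) :=
  {x | (fun k => (x k : ℝ)) ∈ C}

lemma ehrhartSeries_convexHull [Fintype ι] {s : Set (ι → ℝ)} (hs : ∀ y ∈ s, ∑ k, y k = 1) :
    ehrhartSeries (convexHull ℝ s) =
      countingSeries (latticePoints (PointedCone.hull ℝ s : Set (ι → ℝ))) (fun x => ∑ k, x k) := by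
  let φ : (ι → ℝ) →ₗ[ℝ] ℝ := ∑ k, LinearMap.proj k
  have hφ (x : ι → ℝ) : φ x = ∑ k, x k := by simp [φ]
  have hs' : ∀ y ∈ s, φ y = 1 := fun y hy => (hφ y).trans (hs y hy)
  ext t
  simp only [ehrhartSeries, countingSeries, latticePointCount, latticePoints, PowerSeries.coeff_mk]
  split_ifs with ht
  · subst ht
    have hzero : {x ∈ {x : ι → ℤ | (fun k => (x k : ℝ)) ∈ (PointedCone.hull ℝ s : Set (ι → ℝ))} |
        ∑ k, x k = ((0 : ℕ) : ℤ)} = {0} := by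
      ext x
      constructor
      · rintro ⟨hx, hsum⟩
        rcases eq_zero_or_mem_smul_convexHull_of_mem_hull hs' hx with h | ⟨hpos, -⟩
        · funext k
          simpa using congrFun h k
        · exact absurd (by rw [hφ]; exact_mod_cast hsum) hpos.ne'
      · rintro rfl
        exact ⟨by simp [← Pi.zero_def], by simp⟩
    rw [hzero, Set.ncard_singleton, Nat.cast_one]
  · congr 2
    ext x
    have ht : (0 : ℝ) < t := by positivity
    simp only [Set.mem_ofPred_eq, mem_smul_convexHull_iff hs' ht, hφ, SetLike.mem_coe]
    norm_cast

lemma finite_latticePoints [Finite ι] {C : Set (ι → ℝ)} (hC : Bornology.IsBounded C) :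
    (latticePoints C).Finite := by
  cases nonempty_fintype ι
  obtain ⟨r, hr⟩ := hC.exists_norm_le
  classical
  refine (Set.finite_Icc (fun _ : ι => -⌈r⌉) (fun _ => ⌈r⌉)).subset fun x hx => ?_
  have hle (k : ι) : |x k| ≤ ⌈r⌉ := by
    have : |(x k : ℝ)| ≤ r := (norm_le_pi_norm _ k).trans (hr _ hx)
    exact_mod_cast this.trans (Int.le_ceil r)
  exact ⟨fun k => (abs_le.1 (hle k)).1, fun k => (abs_le.1 (hle k)).2⟩

lemma isFinitelyGraded_latticePoints_hull [Fintype ι] {s : Set (ι → ℝ)} (hfin : s.Finite)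
    (hs : ∀ y ∈ s, ∑ k, y k = 1) :
    IsFinitelyGraded (latticePoints (PointedCone.hull ℝ s : Set (ι → ℝ))) (fun x => ∑ k, x k) := by
  let φ : (ι → ℝ) →ₗ[ℝ] ℝ := ∑ k, LinearMap.proj k
  have hφ (x : ι → ℝ) : φ x = ∑ k, x k := by simp [φ]
  have hhull {x : ι → ℝ} (hx : x ∈ PointedCone.hull ℝ s) :=
    eq_zero_or_mem_smul_convexHull_of_mem_hull (fun y hy => (hφ y).trans (hs y hy)) hx
  constructor
  · intro x hx
    have hsum : (0 : ℝ) ≤ φ (fun k => x k) := by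
      rcases hhull hx with h | ⟨hpos, -⟩
      · rw [h, map_zero]
      · exact hpos.le
    rw [hφ] at hsum
    exact_mod_cast hsum
  · intro t
    have hbdd : Bornology.IsBounded ({0} ∪ (t : ℝ) • convexHull ℝ s) :=
      Bornology.isBounded_singleton.union ((isBounded_convexHull.2 hfin.isBounded).smul₀ _)
    refine (finite_latticePoints hbdd).subset fun x ⟨hx, hsum⟩ => ?_
    have hφt : φ (fun k => x k) = t := by
      rw [hφ]
      exact_mod_cast hsum
    exact (hhull hx).imp id fun h => hφt ▸ h.2

end LatticePoints

section CosmologicalCone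

variable {V E : Type*} [DecidableEq V] [DecidableEq E]

/-- The vertices of the cosmological polytope contributed by an edge `f` with endpoints `i`, `j`. -/
def edgeVertices (i j : V) (f : E) : Set ((V ⊕ E) → ℝ) :=
  {Pi.single (Sum.inl i) 1 + Pi.single (Sum.inl j) 1 - Pi.single (Sum.inr f) 1,
   Pi.single (Sum.inl i) 1 - Pi.single (Sum.inl j) 1 + Pi.single (Sum.inr f) 1,
   -Pi.single (Sum.inl i) 1 + Pi.single (Sum.inl j) 1 + Pi.single (Sum.inr f) 1}

/-- The generators of `cosmoCone`: the coordinate vectors of the vertices in `S` and the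
vertices of the cosmological polytope contributed by the edges in `F`. -/
def cosmoGenerators (ends : E → Sym2 V) (S : Finset V) (F : Finset E) : Set ((V ⊕ E) → ℝ) :=
  (fun v => Pi.single (Sum.inl v) 1) '' (S : Set V) ∪
    {x | ∃ f ∈ F, ∃ i j, ends f = s(i, j) ∧ x ∈ edgeVertices i j f}

/-- The cone over the cosmological polytope of the subgraph with vertex set `S` and edge set `F`.
The vertex rays are included so that isolated vertices of the subgraph are not lost. -/
abbrev cosmoCone (ends : E → Sym2 V) (S : Finset V) (F : Finset E) :
    PointedCone ℝ ((V ⊕ E) → ℝ) :=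
  PointedCone.hull ℝ (cosmoGenerators ends S F)

variable {ends : E → Sym2 V} {S : Finset V} {F : Finset E} {v l : V} {f : E}

lemma edgeVertices_comm (i j : V) (f : E) : edgeVertices i j f = edgeVertices j i f := by
  have hadd := add_comm (Pi.single (Sum.inl j) 1 : (V ⊕ E) → ℝ) (Pi.single (Sum.inl i) 1)
  simp only [edgeVertices, neg_add_eq_sub, hadd]
  rw [Set.pair_comm]

lemma edgeVertices_eq_of_mk_eq {i j : V} (h : s(v, l) = s(i, j)) :
    edgeVertices i j f = edgeVertices v l f := by
  rcases Sym2.eq_iff.1 h with ⟨rfl, rfl⟩ | ⟨rfl, rfl⟩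
  · rfl
  · exact edgeVertices_comm _ _ _

lemma single_left_mem_hull_edgeVertices (i j : V) (f : E) :
    Pi.single (Sum.inl i) 1 ∈ PointedCone.hull ℝ (edgeVertices i j f) := by
  have hplus : Pi.single (Sum.inl i) 1 + Pi.single (Sum.inl j) 1 - Pi.single (Sum.inr f) 1 ∈
      PointedCone.hull ℝ (edgeVertices i j f) := PointedCone.subset_hull (by simp [edgeVertices])
  have hminus : Pi.single (Sum.inl i) 1 - Pi.single (Sum.inl j) 1 + Pi.single (Sum.inr f) 1 ∈
      PointedCone.hull ℝ (edgeVertices i j f) := PointedCone.subset_hull (by simp [edgeVertices])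
  convert PointedCone.smul_mem _ (by norm_num : (0 : ℝ) ≤ 1 / 2) (add_mem hplus hminus) using 1
  module

lemma single_mem_cosmoCone (hv : v ∈ S) : Pi.single (Sum.inl v) 1 ∈ cosmoCone ends S F :=
  PointedCone.subset_hull (.inl ⟨v, hv, rfl⟩)

lemma sum_eq_one_of_mem_cosmoGenerators [Fintype V] [Fintype E] {x : (V ⊕ E) → ℝ}
    (hx : x ∈ cosmoGenerators ends S F) : ∑ k, x k = 1 := by
  rcases hx with ⟨v, -, rfl⟩ | ⟨f, -, i, j, -, rfl | rfl | rfl⟩ <;>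
    simp [-Fintype.sum_sum_type, Finset.sum_add_distrib, Finset.sum_sub_distrib]

lemma finite_cosmoGenerators : (cosmoGenerators ends S F).Finite := by
  have hedges : (⋃ f ∈ (F : Set E), edgeVertices (ends f).out.1 (ends f).out.2 f).Finite :=
    F.finite_toSet.biUnion fun f _ => by simp [edgeVertices]
  refine (S.finite_toSet.image _).union (hedges.subset ?_)
  rintro x ⟨f, hf, i, j, hij, hx⟩
  rw [edgeVertices_eq_of_mk_eq ((ends f).out_eq.trans hij)] at hx
  exact Set.mem_biUnion hf hx

lemma isFinitelyGraded_latticePoints_cosmoCone [Fintype V] [Fintype E] (ends : E → Sym2 V)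
    (S : Finset V) (F : Finset E) :
    IsFinitelyGraded (latticePoints (cosmoCone ends S F : Set ((V ⊕ E) → ℝ)))
      (fun x => ∑ k, x k) :=
  isFinitelyGraded_latticePoints_hull finite_cosmoGenerators
    fun _ hy => sum_eq_one_of_mem_cosmoGenerators hy

lemma apply_inl_eq_zero_of_mem_cosmoCone (hF : ∀ g ∈ F, ∀ w ∈ ends g, w ∈ S) (hl : l ∉ S)
    {x : (V ⊕ E) → ℝ} (hx : x ∈ cosmoCone ends S F) : x (Sum.inl l) = 0 := by
  induction hx using Submodule.span_induction with
  | zero => rfl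
  | smul a y _ hy => rw [Pi.smul_apply, hy, smul_zero]
  | add y z _ _ hy hz => rw [Pi.add_apply, hy, hz, add_zero]
  | mem y hy =>
    rcases hy with ⟨v, hv, rfl⟩ | ⟨g, hg, i, j, hij, hy⟩
    · simp [ne_of_mem_of_not_mem hv hl |>.symm]
    · have hi := ne_of_mem_of_not_mem (hF g hg i (by simp [hij])) hl
      have hj := ne_of_mem_of_not_mem (hF g hg j (by simp [hij])) hl
      rcases hy with rfl | rfl | rfl <;> simp [hi.symm, hj.symm]

lemma apply_inr_eq_zero_of_mem_cosmoCone (hf : f ∉ F) {x : (V ⊕ E) → ℝ}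
    (hx : x ∈ cosmoCone ends S F) : x (Sum.inr f) = 0 := by
  induction hx using Submodule.span_induction with
  | zero => rfl
  | smul a y _ hy => rw [Pi.smul_apply, hy, smul_zero]
  | add y z _ _ hy hz => rw [Pi.add_apply, hy, hz, add_zero]
  | mem y hy =>
    rcases hy with ⟨v, -, rfl⟩ | ⟨g, hg, i, j, -, hy⟩
    · simp
    · have hgf := (ne_of_mem_of_not_mem hg hf).symm
      rcases hy with rfl | rfl | rfl <;> simp [hgf]

lemma cosmoCone_insert_vertex (ends : E → Sym2 V) (S : Finset V) (F : Finset E) (l : V) :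
    cosmoCone ends (insert l S) F =
      cosmoCone ends S F ⊔ PointedCone.hull ℝ {Pi.single (Sum.inl l) 1} := by
  rw [cosmoCone, cosmoCone, PointedCone.hull, PointedCone.hull, PointedCone.hull,
    ← Submodule.span_union, cosmoGenerators, cosmoGenerators, Finset.coe_insert,
    Set.image_insert_eq, ← Set.union_singleton, Set.union_right_comm]

lemma cosmoCone_insert_edge (S : Finset V) (F : Finset E) (hf : ends f = s(v, l)) :
    cosmoCone ends S (insert f F) =
      cosmoCone ends S F ⊔ PointedCone.hull ℝ (edgeVertices v l f) := by
  rw [cosmoCone, cosmoCone, PointedCone.hull, PointedCone.hull, PointedCone.hull,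
    ← Submodule.span_union, cosmoGenerators, cosmoGenerators, Set.union_assoc]
  congr 2
  ext x
  simp only [Finset.mem_insert, Set.mem_union, Set.mem_ofPred_eq]
  constructor
  · rintro ⟨g, rfl | hg, i, j, hij, hx⟩
    · rw [edgeVertices_eq_of_mk_eq (hf.symm.trans hij)] at hx
      exact .inr hx
    · exact .inl ⟨g, hg, i, j, hij, hx⟩
  · rintro (⟨g, hg, i, j, hij, hx⟩ | hx)
    · exact ⟨g, .inr hg, i, j, hij, hx⟩
    · exact ⟨f, .inl rfl, v, l, hf, hx⟩

lemma cosmoCone_insert_leaf (S : Finset V) (F : Finset E) (hf : ends f = s(v, l)) :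
    cosmoCone ends (insert l S) (insert f F) =
      cosmoCone ends S F ⊔ PointedCone.hull ℝ (edgeVertices v l f) := by
  have hl : PointedCone.hull ℝ {Pi.single (Sum.inl l) 1} ≤
      PointedCone.hull ℝ (edgeVertices v l f) := by
    rw [Submodule.span_singleton_le_iff_mem, edgeVertices_comm]
    exact single_left_mem_hull_edgeVertices l v f
  rw [cosmoCone_insert_edge _ _ hf, cosmoCone_insert_vertex, sup_assoc, sup_eq_right.2 hl]

lemma cosmoCone_univ [Fintype V] [Fintype E] (hends : ∀ v, ∃ f, v ∈ ends f) :
    cosmoCone ends Finset.univ Finset.univ = PointedCone.hull ℝ (cosmoVertices ends) := by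
  refine le_antisymm (Submodule.span_le.2 ?_) (Submodule.span_mono ?_)
  · rintro _ (⟨v, -, rfl⟩ | ⟨f, -, hx⟩)
    · obtain ⟨f, w, hf⟩ := hends v
      have hvertices : edgeVertices v w f ⊆ cosmoVertices ends := fun x hx => ⟨f, v, w, hf, hx⟩
      exact Submodule.span_mono hvertices (single_left_mem_hull_edgeVertices v w f)
    · exact PointedCone.subset_hull (show _ ∈ cosmoVertices ends from ⟨f, hx⟩)
  · rintro x ⟨f, hx⟩
    exact .inr ⟨f, Finset.mem_univ f, hx⟩

/-- The section of the projection `x ↦ (x l, x f)` along which the cone of a graph grows when the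
leaf `l` is attached to the vertex `v` by the edge `f`. It is linear on each of the half-planes
`p ≤ q` and `q ≤ p`, and maps `(1, -1)`, `(-1, 1)`, `(1, 1)` to the three vertices of the edge. -/
def leafSection {R : Type*} [Ring R] [LinearOrder R] (v l : V) (f : E) (x : R × R) : (V ⊕ E) → R :=
  x.1 • Pi.single (Sum.inl l) 1 + x.2 • Pi.single (Sum.inr f) 1 -
    min x.1 x.2 • Pi.single (Sum.inl v) 1

lemma edge_combination_eq_leafSection (v l : V) (f : E) (a b c : ℝ) :
    a • (Pi.single (Sum.inl v) 1 + Pi.single (Sum.inl l) 1 - Pi.single (Sum.inr f) 1) +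
      b • (Pi.single (Sum.inl v) 1 - Pi.single (Sum.inl l) 1 + Pi.single (Sum.inr f) 1) +
      c • (-Pi.single (Sum.inl v) 1 + Pi.single (Sum.inl l) 1 + Pi.single (Sum.inr f) 1) =
    (2 * min a b) • Pi.single (Sum.inl v) 1 + leafSection v l f (a - b + c, b - a + c) := by
  have hmin : min (a - b + c) (b - a + c) = 2 * min a b - a - b + c := by
    grind
  rw [leafSection, hmin]
  module

lemma leafSection_mem_hull_edgeVertices (v l : V) (f : E) {p q : ℝ} (hpq : 0 ≤ p + q) :
    leafSection v l f (p, q) ∈ PointedCone.hull ℝ (edgeVertices v l f) := by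
  have hcomb := edge_combination_eq_leafSection v l f (max ((p - q) / 2) 0) (max ((q - p) / 2) 0)
    ((p + q) / 2)
  have hmin : min (max ((p - q) / 2) 0) (max ((q - p) / 2) 0) = 0 := by grind
  have hp : max ((p - q) / 2) 0 - max ((q - p) / 2) 0 + (p + q) / 2 = p := by grind
  have hq : max ((q - p) / 2) 0 - max ((p - q) / 2) 0 + (p + q) / 2 = q := by grind
  rw [hmin, hp, hq, mul_zero, zero_smul, zero_add] at hcomb
  rw [← hcomb]
  refine add_mem (add_mem (PointedCone.smul_mem _ (le_max_right _ _) (PointedCone.subset_hull ?_))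
    (PointedCone.smul_mem _ (le_max_right _ _) (PointedCone.subset_hull ?_)))
      (PointedCone.smul_mem _ (by linarith) (PointedCone.subset_hull ?_))
  all_goals simp [edgeVertices]

lemma add_leafSection_apply {R : Type*} [Ring R] [LinearOrder R] (hvl : v ≠ l)
    {y : (V ⊕ E) → R} (hyl : y (Sum.inl l) = 0) (hyf : y (Sum.inr f) = 0) (b : R × R) :
    ((y + leafSection v l f b) (Sum.inl l), (y + leafSection v l f b) (Sum.inr f)) = b := by
  simp [leafSection, hyl, hyf, hvl.symm]

lemma mem_cosmoCone_insert_leaf_iff (hF : ∀ g ∈ F, ∀ w ∈ ends g, w ∈ S) (hv : v ∈ S) (hl : l ∉ S)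
    (hf : ends f = s(v, l)) {x : (V ⊕ E) → ℝ} :
    x ∈ cosmoCone ends (insert l S) (insert f F) ↔ 0 ≤ x (Sum.inl l) + x (Sum.inr f) ∧
      x - leafSection v l f (x (Sum.inl l), x (Sum.inr f)) ∈ cosmoCone ends S F := by
  have hfF : f ∉ F := fun h => hl (hF f h l (by simp [hf]))
  rw [cosmoCone_insert_leaf S F hf]
  constructor
  · intro hx
    obtain ⟨y, hy, z, hz, rfl⟩ := Submodule.mem_sup.1 hx
    obtain ⟨a, b, c, hz⟩ := Submodule.mem_span_triple.1 hz
    have hy' : y + (2 * min (a : ℝ) b) • Pi.single (Sum.inl v) 1 ∈ cosmoCone ends S F :=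
      add_mem hy (PointedCone.smul_mem _ (mul_nonneg zero_le_two (le_min a.2 b.2))
        (single_mem_cosmoCone hv))
    have hdecomp : y + z = y + (2 * min (a : ℝ) b) • Pi.single (Sum.inl v) 1 +
        leafSection v l f ((a : ℝ) - b + c, (b : ℝ) - a + c) := by
      rw [add_assoc y, ← edge_combination_eq_leafSection, ← hz]
      rfl
    have hcoords := add_leafSection_apply (ne_of_mem_of_not_mem hv hl)
      (apply_inl_eq_zero_of_mem_cosmoCone hF hl hy') (apply_inr_eq_zero_of_mem_cosmoCone hfF hy')
      ((a : ℝ) - b + c, (b : ℝ) - a + c)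
    rw [← hdecomp] at hcoords
    refine ⟨?_, by rwa [hcoords, hdecomp, add_sub_cancel_right]⟩
    linarith [c.2, congrArg Prod.fst hcoords, congrArg Prod.snd hcoords]
  · rintro ⟨hpq, hx⟩
    rw [← sub_add_cancel x (leafSection v l f (x (Sum.inl l), x (Sum.inr f)))]
    exact Submodule.add_mem_sup hx (leafSection_mem_hull_edgeVertices v l f hpq)

lemma mem_cosmoCone_insert_vertex_iff (hF : ∀ g ∈ F, ∀ w ∈ ends g, w ∈ S) (hl : l ∉ S)
    {x : (V ⊕ E) → ℝ} :
    x ∈ cosmoCone ends (insert l S) F ↔ 0 ≤ x (Sum.inl l) ∧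
      x - x (Sum.inl l) • Pi.single (Sum.inl l) 1 ∈ cosmoCone ends S F := by
  rw [cosmoCone_insert_vertex]
  constructor
  · intro hx
    obtain ⟨y, hy, z, hz, rfl⟩ := Submodule.mem_sup.1 hx
    obtain ⟨a, rfl⟩ := Submodule.mem_span_singleton.1 hz
    have hdecomp : y + a • Pi.single (Sum.inl l) 1 = y + (a : ℝ) • Pi.single (Sum.inl l) 1 := rfl
    have hcoord : (y + (a : ℝ) • (Pi.single (Sum.inl l) 1 : (V ⊕ E) → ℝ)) (Sum.inl l) = a := by
      rw [Pi.add_apply, apply_inl_eq_zero_of_mem_cosmoCone hF hl hy, Pi.smul_apply,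
        Pi.single_eq_same, smul_eq_mul, mul_one, zero_add]
    rw [hdecomp, hcoord, add_sub_cancel_right]
    exact ⟨a.2, hy⟩
  · rintro ⟨hp, hx⟩
    rw [← sub_add_cancel x (x (Sum.inl l) • Pi.single (Sum.inl l) 1)]
    exact Submodule.add_mem_sup hx
      (PointedCone.smul_mem _ hp (PointedCone.subset_hull rfl))

lemma intCast_leafSection (v l : V) (f : E) (x : ℤ × ℤ) (k : V ⊕ E) :
    ((leafSection v l f x k : ℤ) : ℝ) = leafSection v l f ((x.1 : ℝ), (x.2 : ℝ)) k := by
  simp [leafSection, Pi.single_apply]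

end CosmologicalCone

section CosmologicalSeries

variable {V E : Type*} [DecidableEq V] [DecidableEq E] [Fintype V] [Fintype E]
  {ends : E → Sym2 V} {S : Finset V} {F : Finset E} {v l : V} {f : E}

/-- The generating function of the lattice points of `cosmoCone` by their coordinate sum. When the
subgraph has no isolated vertices, it is the Ehrhart series of its cosmological polytope. -/
noncomputable def cosmoSeries (ends : E → Sym2 V) (S : Finset V) (F : Finset E) : PowerSeries ℚ :=
  countingSeries (latticePoints (cosmoCone ends S F : Set ((V ⊕ E) → ℝ))) (fun x => ∑ k, x k)

lemma cosmoSeries_empty (ends : E → Sym2 V) : cosmoSeries ends ∅ ∅ = 1 := by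
  have hcone : cosmoCone ends ∅ ∅ = ⊥ := by simp [cosmoCone, cosmoGenerators]
  have hpoints : latticePoints (cosmoCone ends ∅ ∅ : Set ((V ⊕ E) → ℝ)) = {0} := by
    rw [hcone]
    ext x
    simp [latticePoints, funext_iff]
  rw [cosmoSeries, hpoints, countingSeries_singleton (by simp)]

lemma cosmoSeries_insert_vertex (hF : ∀ g ∈ F, ∀ w ∈ ends g, w ∈ S) (hl : l ∉ S) :
    cosmoSeries ends (insert l S) F = cosmoSeries ends S F * PowerSeries.mk 1 := by
  rw [← countingSeries_nonneg]
  refine countingSeries_eq_mul (π := fun x => x (Sum.inl l))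
    (σ := fun p => p • Pi.single (Sum.inl l) 1)
    (isFinitelyGraded_latticePoints_cosmoCone ends S F) isFinitelyGraded_nonneg ?_ ?_ ?_
  · intro x
    have hcast : (fun k => ((x - x (Sum.inl l) • Pi.single (Sum.inl l) 1 : (V ⊕ E) → ℤ) k : ℝ)) =
        (fun k => (x k : ℝ)) - (x (Sum.inl l) : ℝ) • Pi.single (Sum.inl l) 1 := by
      ext k
      simp [Pi.single_apply]
    simp only [latticePoints, Set.mem_ofPred_eq, SetLike.mem_coe, hcast,
      mem_cosmoCone_insert_vertex_iff hF hl, Int.cast_nonneg_iff]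
  · intro a ha p
    have := apply_inl_eq_zero_of_mem_cosmoCone hF hl ha
    simp_all
  · intro a p
    simp [-Fintype.sum_sum_type, Finset.sum_add_distrib, ← Finset.mul_sum]

lemma sum_leafSection (v l : V) (f : E) (x : ℤ × ℤ) :
    ∑ k, leafSection v l f x k = max x.1 x.2 := by
  simp only [leafSection, Pi.sub_apply, Pi.add_apply, Pi.smul_apply, smul_eq_mul,
    Finset.sum_sub_distrib, Finset.sum_add_distrib, ← Finset.mul_sum, Finset.sum_pi_single',
    Finset.mem_univ, if_true, mul_one]
  omega

lemma cosmoSeries_insert_leaf (hF : ∀ g ∈ F, ∀ w ∈ ends g, w ∈ S) (hv : v ∈ S) (hl : l ∉ S)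
    (hf : ends f = s(v, l)) :
    cosmoSeries ends (insert l S) (insert f F) =
      cosmoSeries ends S F * countingSeries halfPlane (fun x => max x.1 x.2) := by
  have hfF : f ∉ F := fun h => hl (hF f h l (by simp [hf]))
  refine countingSeries_eq_mul (π := fun x => (x (Sum.inl l), x (Sum.inr f)))
    (σ := leafSection v l f)
    (isFinitelyGraded_latticePoints_cosmoCone ends S F) isFinitelyGraded_halfPlane ?_ ?_ ?_
  · intro x
    have hcast : (fun k => ((x - leafSection v l f (x (Sum.inl l), x (Sum.inr f))) k : ℝ)) =
        (fun k => (x k : ℝ)) - leafSection v l f ((x (Sum.inl l) : ℝ), (x (Sum.inr f) : ℝ)) := by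
      ext k
      simp [intCast_leafSection]
    simp only [latticePoints, halfPlane, Set.mem_ofPred_eq, SetLike.mem_coe, hcast,
      mem_cosmoCone_insert_leaf_iff hF hv hl hf]
    norm_cast
  · intro a ha b
    refine add_leafSection_apply (ne_of_mem_of_not_mem hv hl) ?_ ?_ b
    · exact_mod_cast apply_inl_eq_zero_of_mem_cosmoCone hF hl ha
    · exact_mod_cast apply_inr_eq_zero_of_mem_cosmoCone hfF ha
  · intro a b
    simp only [Pi.add_apply, Finset.sum_add_distrib, sum_leafSection]

end CosmologicalSeries

section Forest

variable {V : Type*} {G : SimpleGraph V}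

lemma exists_forall_adj_eq_of_isAcyclic [Finite V] [Nonempty V] (hG : G.IsAcyclic) :
    ∃ l, ∀ u w, G.Adj l u → G.Adj l w → u = w := by
  obtain ⟨l, v, p, hp, hmax⟩ := SimpleGraph.Walk.exists_isPath_forall_isPath_length_le_length G
  have hsnd (u : V) (hu : G.Adj l u) : u = p.snd := by
    have hcons : ¬ (p.cons hu.symm).IsPath := fun h => by
      have := hmax _ _ _ h
      grind [SimpleGraph.Walk.length_cons]
    refine hG.eq_snd_of_adj_start hp hu ?_
    by_contra hmem
    exact hcons (hp.cons hmem)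
  exact ⟨l, fun u w hu hw => (hsnd u hu).trans (hsnd w hw).symm⟩

lemma finset_induction_of_isAcyclic [DecidableEq V] (hG : G.IsAcyclic) {P : Finset V → Prop}
    (empty : P ∅)
    (insert : ∀ l S, l ∉ S → (∀ u ∈ S, ∀ w ∈ S, G.Adj l u → G.Adj l w → u = w) → P S →
      P (insert l S)) (S : Finset V) : P S := by
  induction S using Finset.strongInduction with | H S ih
  rcases S.eq_empty_or_nonempty with rfl | ⟨v, hv⟩
  · exact empty
  have : Nonempty (S : Set V) := ⟨v, hv⟩
  obtain ⟨⟨l, hl⟩, hleaf⟩ := exists_forall_adj_eq_of_isAcyclic (hG.induce (S : Set V))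
  have hlS : l ∈ S := hl
  rw [← Finset.insert_erase hlS]
  refine insert l _ (Finset.notMem_erase l S) (fun u hu w hw hlu hlw => ?_)
    (ih _ (Finset.erase_ssubset hlS))
  exact congrArg Subtype.val
    (hleaf ⟨u, Finset.mem_of_mem_erase hu⟩ ⟨w, Finset.mem_of_mem_erase hw⟩ hlu hlw)

open Classical in
/-- The edges of `G` with both endpoints in `S`. -/
noncomputable def edgesWithin (G : SimpleGraph V) [Fintype G.edgeSet] (S : Finset V) :
    Finset G.edgeSet :=
  {f | ∀ v ∈ (f : Sym2 V), v ∈ S}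

variable [Fintype G.edgeSet] {S : Finset V} {l v : V} {f : G.edgeSet}

lemma mem_edgesWithin : f ∈ edgesWithin G S ↔ ∀ v ∈ (f : Sym2 V), v ∈ S := by
  simp [edgesWithin]

lemma edgesWithin_empty : edgesWithin G ∅ = ∅ := by
  refine Finset.eq_empty_of_forall_notMem fun f hf => ?_
  exact Finset.notMem_empty _ (mem_edgesWithin.1 hf _ (Sym2.out_fst_mem (f : Sym2 V)))

lemma edgesWithin_univ [Fintype V] : edgesWithin G Finset.univ = Finset.univ := by
  ext f
  simp [mem_edgesWithin]

variable [DecidableEq V]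

lemma mem_edgesWithin_insert :
    f ∈ edgesWithin G (insert l S) ↔ f ∈ edgesWithin G S ∨ ∃ u ∈ S, (f : Sym2 V) = s(u, l) := by
  obtain ⟨⟨a, b⟩, hab⟩ := f
  have hne : a ≠ b := G.ne_of_adj hab
  simp only [mem_edgesWithin, Sym2.mem_iff, Sym2.eq_iff, forall_eq_or_imp, forall_eq]
  grind

lemma edgesWithin_insert_of_forall_not_adj (h : ∀ u ∈ S, ¬ G.Adj l u) :
    edgesWithin G (insert l S) = edgesWithin G S := by
  ext f
  rw [mem_edgesWithin_insert, or_iff_left]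
  rintro ⟨u, hu, hf⟩
  exact h u hu ((G.mem_edgeSet.1 (hf ▸ f.2)).symm)

lemma edgesWithin_insert_of_forall_adj_eq [DecidableEq G.edgeSet] (hv : v ∈ S)
    (hf : (f : Sym2 V) = s(v, l)) (h : ∀ u ∈ S, G.Adj l u → u = v) :
    edgesWithin G (insert l S) = insert f (edgesWithin G S) := by
  ext g
  rw [mem_edgesWithin_insert, Finset.mem_insert, or_comm]
  refine or_congr_left ⟨?_, ?_⟩
  · rintro ⟨u, hu, hg⟩
    obtain rfl := h u hu (G.mem_edgeSet.1 (hg ▸ g.2)).symm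
    exact Subtype.ext (hg.trans hf.symm)
  · rintro rfl
    exact ⟨v, hv, hf⟩

end Forest

section Volume

variable {V : Type*} [Fintype V] [DecidableEq V] {G : SimpleGraph V} [Fintype G.edgeSet]

theorem cosmoSeries_mul_of_isAcyclic (hG : G.IsAcyclic) (S : Finset V) :
    cosmoSeries (fun f : G.edgeSet => (f : Sym2 V)) S (edgesWithin G S) *
      (1 - PowerSeries.X) ^ (S.card + (edgesWithin G S).card) =
        (1 + 3 * PowerSeries.X) ^ (edgesWithin G S).card := by
  induction S using finset_induction_of_isAcyclic hG with
  | empty => simp [edgesWithin_empty, cosmoSeries_empty]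
  | insert l S hl hleaf ih =>
    have hends : ∀ g ∈ edgesWithin G S, ∀ w ∈ (g : Sym2 V), w ∈ S := fun g => mem_edgesWithin.1
    by_cases hadj : ∃ v ∈ S, G.Adj l v
    · obtain ⟨v, hv, hlv⟩ := hadj
      let f : G.edgeSet := ⟨s(v, l), hlv.symm⟩
      have hf : f ∉ edgesWithin G S := fun h => hl (hends f h l (Sym2.mem_mk_right v l))
      have huniq : ∀ u ∈ S, G.Adj l u → u = v := fun u hu hlu => hleaf u hu v hv hlu hlv
      rw [edgesWithin_insert_of_forall_adj_eq (f := f) hv rfl huniq,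
        cosmoSeries_insert_leaf hends hv hl rfl, Finset.card_insert_of_notMem hl,
        Finset.card_insert_of_notMem hf, pow_succ (1 + 3 * PowerSeries.X), ← ih,
        ← countingSeries_halfPlane_mul]
      ring
    · push Not at hadj
      rw [edgesWithin_insert_of_forall_not_adj hadj, cosmoSeries_insert_vertex hends hl,
        Finset.card_insert_of_notMem hl, ← ih]
      linear_combination
        cosmoSeries (fun f : G.edgeSet => (f : Sym2 V)) S (edgesWithin G S) *
          (1 - PowerSeries.X) ^ (S.card + (edgesWithin G S).card) *
          PowerSeries.mk_one_mul_one_sub_eq_one ℚ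

lemma ehrhartSeries_cosmoPolytope (hG : ∀ v, ∃ u, G.Adj v u) :
    ehrhartSeries (cosmoPolytope (fun f : G.edgeSet => (f : Sym2 V))) =
      cosmoSeries (fun f : G.edgeSet => (f : Sym2 V)) Finset.univ Finset.univ := by
  have hends (v : V) : ∃ f : G.edgeSet, v ∈ (f : Sym2 V) := by
    obtain ⟨u, hu⟩ := hG v
    exact ⟨⟨s(v, u), hu⟩, Sym2.mem_mk_left v u⟩
  have hsum : ∀ x ∈ cosmoVertices (fun f : G.edgeSet => (f : Sym2 V)), ∑ k, x k = 1 :=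
    fun x ⟨f, hx⟩ => sum_eq_one_of_mem_cosmoGenerators (F := Finset.univ) (S := ∅)
      (.inr ⟨f, Finset.mem_univ f, hx⟩)
  rw [cosmoPolytope, ehrhartSeries_convexHull hsum, cosmoSeries, cosmoCone_univ hends]

theorem isHStarPoly_cosmoPolytope_iff [Nonempty V] (hG : G.IsAcyclic) (hiso : ∀ v, ∃ u, G.Adj v u)
    {h : Polynomial ℚ} :
    IsHStarPoly (cosmoPolytope (fun f : G.edgeSet => (f : Sym2 V)))
      (Fintype.card V + Fintype.card G.edgeSet - 1) h ↔
        h = (1 + 3 * X) ^ Fintype.card G.edgeSet := by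
  have hdim : Fintype.card V + Fintype.card G.edgeSet - 1 + 1 =
      Fintype.card V + Fintype.card G.edgeSet :=
    Nat.sub_add_cancel (Nat.add_pos_left Fintype.card_pos _)
  have hseries := cosmoSeries_mul_of_isAcyclic hG Finset.univ
  rw [edgesWithin_univ, Finset.card_univ, Finset.card_univ] at hseries
  rw [IsHStarPoly, ehrhartSeries_cosmoPolytope hiso, hdim, hseries, eq_comm,
    ← (Polynomial.coe_injective ℚ).eq_iff]
  have hthree : ((3 : Polynomial ℚ) : PowerSeries ℚ) = 3 :=
    map_ofNat (Polynomial.coeToPowerSeries.ringHom (R := ℚ)) 3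
  push_cast
  rw [hthree]

theorem normalized_volume_tree_general [Nonempty V] (hG : G.IsAcyclic)
    (hiso : ∀ v : V, ∃ u : V, G.Adj v u) (m : ℕ) (hm : m = Fintype.card G.edgeSet)
    (h : Polynomial ℚ)
    (hh : IsHStarPoly (cosmoPolytope (fun f : G.edgeSet => (f : Sym2 V)))
      (Fintype.card V + Fintype.card G.edgeSet - 1) h) :
    h.eval 1 = 4 ^ m := by
  rw [(isHStarPoly_cosmoPolytope_iff hG hiso).1 hh, hm]
  norm_num

end Volume

/-- Let `T_m` be a tree with `m` edges.  Then the normalized volume of its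
cosmological polytope is `Vol(C_{T_m}) = h*(C_{T_m}; 1) = 4^m`. -/
theorem normalized_volume_tree {V : Type*} [Fintype V] [DecidableEq V]
    (G : SimpleGraph V) [Fintype G.edgeSet]
    (htree : G.IsTree) (hiso : ∀ v : V, ∃ u : V, G.Adj v u)
    (m : ℕ) (hm : m = Fintype.card G.edgeSet)
    (h : Polynomial ℚ)
    (hh : IsHStarPoly (cosmoPolytope (fun f : G.edgeSet => (f : Sym2 V)))
      (Fintype.card V + Fintype.card G.edgeSet - 1) h) :
    h.eval 1 = 4 ^ m := by
  have := htree.connected.nonempty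
  exact normalized_volume_tree_general htree.isAcyclic hiso m hm h hh
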